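/- arXiv:1506.03655 — 6 statements merged into one kernel-verified Lean document; each statement's English description precedes it below -/
import Mathlib

section
/- Let L be a complex Lie algebra. Then for any complex numbers α, β, γ one has the equality of subspaces D(α,β,γ)(L) = D(0, β−γ, γ−β)(L) ∩ D(2α, β+γ, β+γ)(L). -/
/-- The space of `(α,β,γ)`-derivations of a complex Lie algebra `L`:
linear endomorphisms `D` with `α • D ⁅x,y⁆ = β • ⁅D x, y⁆ + γ • ⁅x, D y⁆`. -/
def abgDer (α β γ : ℂ) (L : Type*) [LieRing L] [LieAlgebra ℂ L] :
    Submodule ℂ (Module.End ℂ L) where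
  carrier := {D | ∀ x y : L, α • D ⁅x, y⁆ = β • ⁅D x, y⁆ + γ • ⁅x, D y⁆}
  zero_mem' := by intro x y; simp
  add_mem' := by
    intro a b ha hb x y
    simp only [LinearMap.add_apply, smul_add, add_lie, lie_add]
    rw [ha x y, hb x y]
    abel
  smul_mem' := by
    intro c D hD x y
    simp only [LinearMap.smul_apply, smul_lie, lie_smul]
    rw [smul_comm α c, hD x y, smul_add, smul_comm c β, smul_comm c γ]

/-!
For a fixed linear map `D`, the triples `(α, β, γ)` for which `D` is an `(α, β, γ)`-derivation form
a submodule of `R³`, which is stable under the swap `(α, β, γ) ↦ (α, γ, β)` because the bracket is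
skew-symmetric. When `2` can be cancelled, a triple lies in such a submodule if and only if its
difference `(0, β - γ, γ - β)` and its sum `(2α, β + γ, β + γ)` with the swapped triple do.
-/

section GeneralRing

variable {R L : Type*} [CommRing R] [LieRing L] [LieAlgebra R L]

/-- The `(α, β, γ)`-derivations of a Lie algebra over any commutative ring, as a predicate on
linear endomorphisms. Membership in `abgDer α β γ L` is the case `R = ℂ`, by definition. -/
def IsABGDerivation (α β γ : R) (D : Module.End R L) : Prop :=
  ∀ x y : L, α • D ⁅x, y⁆ = β • ⁅D x, y⁆ + γ • ⁅x, D y⁆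

namespace IsABGDerivation

variable {α β γ α' β' γ' : R} {D : Module.End R L}

theorem add (h : IsABGDerivation α β γ D) (h' : IsABGDerivation α' β' γ' D) :
    IsABGDerivation (α + α') (β + β') (γ + γ') D := fun x y => by
  linear_combination (norm := module) h x y + h' x y

theorem sub (h : IsABGDerivation α β γ D) (h' : IsABGDerivation α' β' γ' D) :
    IsABGDerivation (α - α') (β - β') (γ - γ') D := fun x y => by
  linear_combination (norm := module) h x y - h' x y

theorem of_mul {r : R} (hr : IsSMulRegular L r)
    (h : IsABGDerivation (r * α) (r * β) (r * γ) D) : IsABGDerivation α β γ D := fun x y =>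
  hr <| by simpa only [smul_add, smul_smul] using h x y

theorem swap (h : IsABGDerivation α β γ D) : IsABGDerivation α γ β D := fun x y =>
  calc
    α • D ⁅x, y⁆ = -(α • D ⁅y, x⁆) := by rw [← lie_skew x y, map_neg, smul_neg]
    _ = -(β • ⁅D y, x⁆ + γ • ⁅y, D x⁆) := by rw [h y x]
    _ = γ • ⁅D x, y⁆ + β • ⁅x, D y⁆ := by
      rw [← lie_skew (D x) y, ← lie_skew x (D y)]
      module

end IsABGDerivation

theorem abgDer_eq_inf_general (h2 : IsSMulRegular L (2 : R)) (α β γ : R) (D : Module.End R L) :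
    IsABGDerivation α β γ D ↔
      IsABGDerivation 0 (β - γ) (γ - β) D ∧ IsABGDerivation (2 * α) (β + γ) (β + γ) D := by
  refine ⟨fun h => ⟨?_, ?_⟩, fun ⟨h_diff, h_sum⟩ => .of_mul h2 ?_⟩
  · simpa only [sub_self] using h.sub h.swap
  · simpa only [two_mul, add_comm γ β] using h.add h.swap
  · convert h_diff.add h_sum using 1 <;> ring

end GeneralRing

/-- For a complex Lie algebra `L` and any `α β γ : ℂ`,
`D(α,β,γ)(L) = D(0, β−γ, γ−β)(L) ∩ D(2α, β+γ, β+γ)(L)`. -/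
theorem abgDer_eq_inf (L : Type*) [LieRing L] [LieAlgebra ℂ L] (α β γ : ℂ) :
    abgDer α β γ L = abgDer 0 (β - γ) (γ - β) L ⊓ abgDer (2 * α) (β + γ) (β + γ) L := by
  ext D
  exact abgDer_eq_inf_general (IsSMulRegular.of_ne_zero two_ne_zero) α β γ D
end

section
/- Let L be a complex Lie algebra. Then for any complex numbers α, β, γ there exists a complex number δ such that the subspace D(α,β,γ)(L) of End(L) is equal to one of the following four subspaces: D(δ,0,0)(L), D(δ,1,−1)(L), D(δ,1,0)(L), or D(δ,1,1)(L). -/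
/-!
Swapping `x` and `y` in the defining identity of a derivation `D` of an anticommutative product
gives the same identity with `β` and `γ` exchanged. If `β ≠ γ`, subtracting the two shows that
`⁅x, D y⁆ = ⁅D x, y⁆`, and then only the sum `β + γ` matters. So for `β ≠ γ` and `β + γ ≠ 0` the
triple may be replaced by `(α, β + γ, 0)`; the rest is rescaling.
-/

section BilinDer

variable {R V : Type*} [CommRing R] [AddCommGroup V] [Module R V]

/-- The `(α,β,γ)`-derivations of the (not necessarily associative or Lie) algebra whose product
is the bilinear map `B`: the endomorphisms `D` with
`α • D (B x y) = β • B (D x) y + γ • B x (D y)`. For a Lie algebra, `B` is the adjoint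
representation. -/
def bilinDer (B : V →ₗ[R] V →ₗ[R] V) (α β γ : R) : Submodule R (Module.End R V) where
  carrier := {D | ∀ x y : V, α • D (B x y) = β • B (D x) y + γ • B x (D y)}
  zero_mem' x y := by simp
  add_mem' {D E} hD hE x y := by
    simp only [LinearMap.add_apply, map_add, smul_add, hD x y, hE x y]
    abel
  smul_mem' c D hD x y := by
    simp only [LinearMap.smul_apply, map_smul, smul_comm _ c, hD x y, smul_add]

variable {B : V →ₗ[R] V →ₗ[R] V} {α β γ : R} {D : Module.End R V}

theorem mem_bilinDer :
    D ∈ bilinDer B α β γ ↔ ∀ x y, α • D (B x y) = β • B (D x) y + γ • B x (D y) :=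
  Iff.rfl

theorem bilinDer_mul_left {c : R} (hc : IsSMulRegular V c) :
    bilinDer B (c * α) (c * β) (c * γ) = bilinDer B α β γ := by
  ext D
  simp only [mem_bilinDer, mul_smul, ← smul_add, hc.eq_iff]

theorem mem_bilinDer_swap (hB : B.flip = -B) (hD : D ∈ bilinDer B α β γ) :
    D ∈ bilinDer B α γ β := by
  have skew (x y : V) : B x y = -B y x := LinearMap.congr_fun₂ hB y x
  intro x y
  rw [skew x y, skew (D x) y, skew x (D y), map_neg, smul_neg, hD y x]
  module

theorem apply_right_eq_apply_left_of_mem_bilinDer (hB : B.flip = -B)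
    (h : IsSMulRegular V (β - γ)) (hD : D ∈ bilinDer B α β γ) (x y : V) :
    B x (D y) = B (D x) y := by
  apply h
  linear_combination (norm := module) hD x y - mem_bilinDer_swap hB hD x y

theorem mem_bilinDer_iff_of_isSMulRegular_sub (hB : B.flip = -B) (h : IsSMulRegular V (β - γ)) :
    D ∈ bilinDer B α β γ ↔
      (∀ x y, B x (D y) = B (D x) y) ∧ ∀ x y, α • D (B x y) = (β + γ) • B (D x) y := by
  constructor
  · intro hD
    have across := apply_right_eq_apply_left_of_mem_bilinDer hB h hD
    exact ⟨across, fun x y => by rw [hD x y, across, add_smul]⟩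
  · rintro ⟨across, hD⟩ x y
    rw [hD, across, add_smul]

theorem bilinDer_eq_bilinDer_add_zero (hB : B.flip = -B) (hsub : IsSMulRegular V (β - γ))
    (hadd : IsSMulRegular V (β + γ)) :
    bilinDer B α β γ = bilinDer B α (β + γ) 0 := by
  have hadd' : IsSMulRegular V (β + γ - 0) := by rwa [sub_zero]
  ext D
  rw [mem_bilinDer_iff_of_isSMulRegular_sub hB hsub,
    mem_bilinDer_iff_of_isSMulRegular_sub hB hadd', add_zero]

end BilinDer

section Field

variable {K V : Type*} [Field K] [AddCommGroup V] [Module K V] {B : V →ₗ[K] V →ₗ[K] V}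

theorem bilinDer_div {c : K} (hc : c ≠ 0) (α β γ : K) :
    bilinDer B (α / c) (β / c) (γ / c) = bilinDer B α β γ := by
  rw [← bilinDer_mul_left (IsSMulRegular.of_ne_zero hc)]
  simp only [mul_div_cancel₀ _ hc]

theorem abgDer_eq_one_of_four_general (hB : B.flip = -B) (α β γ : K) :
    ∃ δ : K, bilinDer B α β γ = bilinDer B δ 0 0 ∨ bilinDer B α β γ = bilinDer B δ 1 (-1) ∨
      bilinDer B α β γ = bilinDer B δ 1 0 ∨ bilinDer B α β γ = bilinDer B δ 1 1 := by
  rcases eq_or_ne β γ with rfl | hne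
  · rcases eq_or_ne β 0 with rfl | hβ
    · exact ⟨α, .inl rfl⟩
    · refine ⟨α / β, .inr (.inr (.inr ?_))⟩
      rw [← bilinDer_div hβ, div_self hβ]
  · rcases eq_or_ne (β + γ) 0 with hsum | hsum
    · obtain rfl : γ = -β := eq_neg_of_add_eq_zero_right hsum
      have hβ : β ≠ 0 := fun hβ => hne (by rw [hβ, neg_zero])
      refine ⟨α / β, .inr (.inl ?_)⟩
      rw [← bilinDer_div hβ, neg_div, div_self hβ]
    · refine ⟨α / (β + γ), .inr (.inr (.inl ?_))⟩
      rw [bilinDer_eq_bilinDer_add_zero hB (.of_ne_zero (sub_ne_zero.mpr hne))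
        (.of_ne_zero hsum), ← bilinDer_div hsum, div_self hsum, zero_div]

end Field

section Lie

variable (L : Type*) [LieRing L] [LieAlgebra ℂ L]

theorem abgDer_eq_bilinDer_ad (α β γ : ℂ) :
    abgDer α β γ L = bilinDer (LieAlgebra.ad ℂ L : L →ₗ[ℂ] Module.End ℂ L) α β γ :=
  rfl

theorem flip_ad : (LieAlgebra.ad ℂ L : L →ₗ[ℂ] Module.End ℂ L).flip = -LieAlgebra.ad ℂ L :=
  LinearMap.ext₂ fun x y => (lie_skew y x).symm

end Lie

/-- For a complex Lie algebra `L` and any `α β γ : ℂ`, there exists `δ : ℂ` such that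
`D(α,β,γ)(L)` equals one of `D(δ,0,0)(L)`, `D(δ,1,−1)(L)`, `D(δ,1,0)(L)`, `D(δ,1,1)(L)`. -/
theorem abgDer_eq_one_of_four (L : Type*) [LieRing L] [LieAlgebra ℂ L] (α β γ : ℂ) :
    ∃ δ : ℂ, abgDer α β γ L = abgDer δ 0 0 L ∨ abgDer α β γ L = abgDer δ 1 (-1) L ∨
      abgDer α β γ L = abgDer δ 1 0 L ∨ abgDer α β γ L = abgDer δ 1 1 L := by
  simp only [abgDer_eq_bilinDer_ad]
  exact abgDer_eq_one_of_four_general (flip_ad L) α β γ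
end

section
/- Let L be a complex Lie algebra. Then the subspace D(0,1,−1)(L) = {A ∈ End(L) | ⁅A x, y⁆ = ⁅x, A y⁆ for all x, y ∈ L} is closed under the Jordan product: for all A, B ∈ D(0,1,−1)(L), the operator (1/2)(A∘B + B∘A) again belongs to D(0,1,−1)(L). -/
/-!
The space `D(0,1,−1)(L)` consists of the endomorphisms of `L` that are self-adjoint for the Lie
bracket, viewed as a bilinear map. As for any bilinear map, a product reverses under adjoints: if
`A` and `B` are self-adjoint, then `A * B` and `B * A` are adjoint to each other, so their sum is
self-adjoint.
-/

theorem isSelfAdjoint_comp_add_comp {R M N : Type*} [CommSemiring R] [AddCommMonoid M] [Module R M]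
    [AddCommMonoid N] [Module R N] {σ : R →+* R} {b : M →ₗ[R] M →ₛₗ[σ] N} {f g : M → M}
    (hf : b.IsSelfAdjoint f) (hg : b.IsSelfAdjoint g) :
    b.IsSelfAdjoint (f ∘ g + g ∘ f) := by
  have hfg : b.IsAdjointPair b (f ∘ g) (g ∘ f) := hg.comp hf
  have hgf : b.IsAdjointPair b (g ∘ f) (f ∘ g) := hf.comp hg
  have hsum : b.IsAdjointPair b (f ∘ g + g ∘ f) (g ∘ f + f ∘ g) := hfg.add hgf
  rwa [add_comm (g ∘ f)] at hsum

section Quasicentroid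

variable {R L : Type*} [CommRing R] [LieRing L] [LieAlgebra R L]

variable (R L) in
/-- The quasicentroid `D(0,1,−1)(L)` of a Lie algebra `L`, encoded as the space of endomorphisms
that are self-adjoint with respect to the bracket `x ↦ y ↦ ⁅x, y⁆`, which as a bilinear map is
`LieAlgebra.ad`. -/
def quasicentroid : Submodule R (Module.End R L) :=
  (LieAlgebra.ad R L : L →ₗ[R] Module.End R L).selfAdjointSubmodule

theorem mem_quasicentroid {A : Module.End R L} :
    A ∈ quasicentroid R L ↔ ∀ x y : L, ⁅A x, y⁆ = ⁅x, A y⁆ :=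
  Iff.rfl

theorem mul_add_mul_mem_quasicentroid {A B : Module.End R L} (hA : A ∈ quasicentroid R L)
    (hB : B ∈ quasicentroid R L) : A * B + B * A ∈ quasicentroid R L :=
  isSelfAdjoint_comp_add_comp hA hB

theorem jordan_mem_of_quasicentroid_general {A B : Module.End R L} (hA : A ∈ quasicentroid R L)
    (hB : B ∈ quasicentroid R L) (c : R) : c • (A * B + B * A) ∈ quasicentroid R L :=
  (quasicentroid R L).smul_mem c (mul_add_mul_mem_quasicentroid hA hB)

end Quasicentroid

/-- The space `D(0,1,−1)(L) = {A ∈ End(L) | ⁅A x, y⁆ = ⁅x, A y⁆ for all x, y}` of a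
complex Lie algebra `L` is closed under the Jordan product `(1/2)(A∘B + B∘A)`. -/
theorem jordan_mem_of_quasicentroid {L : Type*} [LieRing L] [LieAlgebra ℂ L]
    (A B : Module.End ℂ L)
    (hA : ∀ x y : L, ⁅A x, y⁆ = ⁅x, A y⁆)
    (hB : ∀ x y : L, ⁅B x, y⁆ = ⁅x, B y⁆) :
    ∀ x y : L, ⁅(((1 : ℂ) / 2) • (A * B + B * A)) x, y⁆
      = ⁅x, (((1 : ℂ) / 2) • (A * B + B * A)) y⁆ :=
  have hA' : A ∈ quasicentroid ℂ L := mem_quasicentroid.mpr hA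
  have hB' : B ∈ quasicentroid ℂ L := mem_quasicentroid.mpr hB
  mem_quasicentroid.mp (jordan_mem_of_quasicentroid_general hA' hB' (1 / 2))
end

section
/- Let L be a complex Lie algebra. Then D(1,1,−1)(L) = D(0,1,−1)(L) ∩ D(1,0,0)(L), i.e. a linear endomorphism D of L satisfies D⁅x,y⁆ = ⁅D x, y⁆ − ⁅x, D y⁆ for all x, y ∈ L if and only if it satisfies both ⁅D x, y⁆ = ⁅x, D y⁆ for all x, y and D⁅x,y⁆ = 0 for all x, y. -/
/-!
The left-hand side of `D ⁅x, y⁆ = ⁅D x, y⁆ - ⁅x, D y⁆` is skew in `x` and `y`, while the right-hand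
side is symmetric. In the absence of `2`-torsion the two can only agree if both vanish.
-/

theorem isSMulRegular_nat_of_isTorsionFree (R M : Type*) [Semiring R] [IsCancelMulZero R]
    [CharZero R] [AddCommMonoid M] [Module R M] [Module.IsTorsionFree R M] {n : ℕ} (hn : n ≠ 0) :
    IsSMulRegular M n :=
  have : IsAddTorsionFree M := .of_isTorsionFree R M
  nsmul_right_injective hn

theorem forall_eq_iff_of_skew_of_symm {X A : Type*} [AddGroup A]
    (two_reg : IsSMulRegular A (2 : ℕ)) {f g : X → X → A}
    (f_skew : ∀ x y, f y x = -f x y) (g_symm : ∀ x y, g y x = g x y) :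
    (∀ x y, f x y = g x y) ↔ (∀ x y, g x y = 0) ∧ ∀ x y, f x y = 0 := by
  constructor
  · intro f_eq_g
    have f_eq_neg (x y : X) : f x y = -f x y :=
      calc f x y = g x y := f_eq_g x y
        _ = g y x := (g_symm x y).symm
        _ = f y x := (f_eq_g y x).symm
        _ = -f x y := f_skew x y
    have f_eq_zero (x y : X) : f x y = 0 :=
      two_reg.right_eq_zero_of_smul <| by rw [two_nsmul, ← eq_neg_iff_add_eq_zero, ← f_eq_neg]
    exact ⟨fun x y ↦ (f_eq_g x y).symm.trans (f_eq_zero x y), f_eq_zero⟩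
  · rintro ⟨g_eq_zero, f_eq_zero⟩ x y
    rw [f_eq_zero, g_eq_zero]

section LieRing

variable {L : Type*} [LieRing L]

theorem map_lie_swap {F M : Type*} [AddGroup M] [FunLike F L M] [AddMonoidHomClass F L M]
    (D : F) (x y : L) : D ⁅y, x⁆ = -D ⁅x, y⁆ := by
  rw [← lie_skew, map_neg]

theorem lie_sub_lie_swap (D : L → L) (x y : L) :
    ⁅D y, x⁆ - ⁅y, D x⁆ = ⁅D x, y⁆ - ⁅x, D y⁆ := by
  rw [← lie_skew (D y) x, ← lie_skew y (D x), neg_sub_neg]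

theorem abgDer_one_one_neg_one_general {F R : Type*} [FunLike F L L] [AddMonoidHomClass F L L]
    [DistribSMul R L] (two_reg : IsSMulRegular L (2 : ℕ)) (α β : R) (D : F) :
    (∀ x y : L, α • D ⁅x, y⁆ = β • (⁅D x, y⁆ - ⁅x, D y⁆)) ↔
      (∀ x y : L, β • ⁅D x, y⁆ = β • ⁅x, D y⁆) ∧ ∀ x y : L, α • D ⁅x, y⁆ = 0 := by
  have left_skew (x y : L) : α • D ⁅y, x⁆ = -(α • D ⁅x, y⁆) := by
    rw [map_lie_swap, smul_neg]
  have right_symm (x y : L) : β • (⁅D y, x⁆ - ⁅y, D x⁆) = β • (⁅D x, y⁆ - ⁅x, D y⁆) := by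
    rw [lie_sub_lie_swap]
  rw [forall_eq_iff_of_skew_of_symm two_reg left_skew right_symm]
  simp only [smul_sub, sub_eq_zero]

end LieRing

section LieAlgebra

variable {L : Type*} [LieRing L] [LieAlgebra ℂ L]

theorem mem_abgDer {α β γ : ℂ} {D : Module.End ℂ L} :
    D ∈ abgDer α β γ L ↔ ∀ x y : L, α • D ⁅x, y⁆ = β • ⁅D x, y⁆ + γ • ⁅x, D y⁆ :=
  Iff.rfl

theorem mem_abgDer_neg {α β : ℂ} {D : Module.End ℂ L} :
    D ∈ abgDer α β (-β) L ↔ ∀ x y : L, α • D ⁅x, y⁆ = β • (⁅D x, y⁆ - ⁅x, D y⁆) := by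
  simp only [mem_abgDer, neg_smul, ← sub_eq_add_neg, smul_sub]

theorem mem_abgDer_zero_neg {β : ℂ} {D : Module.End ℂ L} :
    D ∈ abgDer 0 β (-β) L ↔ ∀ x y : L, β • ⁅D x, y⁆ = β • ⁅x, D y⁆ := by
  simp only [mem_abgDer_neg, zero_smul, smul_sub, @eq_comm L 0, sub_eq_zero]

theorem mem_abgDer_zero_zero {α : ℂ} {D : Module.End ℂ L} :
    D ∈ abgDer α 0 0 L ↔ ∀ x y : L, α • D ⁅x, y⁆ = 0 := by
  simp only [mem_abgDer, zero_smul, add_zero]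

theorem abgDer_neg_eq_inf (α β : ℂ) :
    abgDer α β (-β) L = abgDer 0 β (-β) L ⊓ abgDer α 0 0 L := by
  ext D
  rw [Submodule.mem_inf, mem_abgDer_neg, mem_abgDer_zero_neg, mem_abgDer_zero_zero]
  exact abgDer_one_one_neg_one_general (isSMulRegular_nat_of_isTorsionFree ℂ L two_ne_zero) α β D

end LieAlgebra

/-- For a complex Lie algebra `L`: `D(1,1,−1)(L) = D(0,1,−1)(L) ∩ D(1,0,0)(L)`; equivalently,
`D ⁅x,y⁆ = ⁅D x, y⁆ − ⁅x, D y⁆` for all `x, y` iff `⁅D x, y⁆ = ⁅x, D y⁆` for all `x, y`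
and `D ⁅x,y⁆ = 0` for all `x, y`. -/
theorem abgDer_one_one_neg_one (L : Type*) [LieRing L] [LieAlgebra ℂ L] :
    abgDer 1 1 (-1) L = abgDer 0 1 (-1) L ⊓ abgDer 1 0 0 L ∧
    ∀ D : Module.End ℂ L,
      (∀ x y : L, D ⁅x, y⁆ = ⁅D x, y⁆ - ⁅x, D y⁆) ↔
        ((∀ x y : L, ⁅D x, y⁆ = ⁅x, D y⁆) ∧ ∀ x y : L, D ⁅x, y⁆ = 0) := by
  refine ⟨abgDer_neg_eq_inf 1 1, fun D ↦ ?_⟩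
  simpa only [one_smul] using
    abgDer_one_one_neg_one_general (isSMulRegular_nat_of_isTorsionFree ℂ L two_ne_zero) (1 : ℂ) 1 D
end

section
/- Let L be a finite-dimensional complex Lie algebra. Then dim (D(1,0,0)(L) ∩ D(0,1,0)(L)) = (dim L − dim L²)·dim C(L). -/
/-- The derived subalgebra `L² = ⁅L,L⁆`: the linear span of all brackets. -/
def derivedSub (L : Type*) [LieRing L] [LieAlgebra ℂ L] : Submodule ℂ L :=
  Submodule.span ℂ {z : L | ∃ x y : L, ⁅x, y⁆ = z}

/-- The center `C(L) = {x ∈ L | ⁅x,y⁆ = 0 for all y}` of a complex Lie algebra. -/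
def centerSub (L : Type*) [LieRing L] [LieAlgebra ℂ L] : Submodule ℂ L where
  carrier := {x | ∀ y : L, ⁅x, y⁆ = 0}
  zero_mem' := by intro y; simp
  add_mem' := by intro a b ha hb y; rw [add_lie, ha y, hb y, add_zero]
  smul_mem' := by intro c x hx y; rw [smul_lie, hx y, smul_zero]

/-! An endomorphism lies in `D(1,0,0)(L)` when it vanishes on `L²`, and in `D(0,1,0)(L)` when its
values are central. One satisfying both conditions is the same as a linear map `L / L² → C(L)`. -/

section LinearAlgebra

open Submodule

variable {R M N : Type*} [CommRing R] [AddCommGroup M] [Module R M] [AddCommGroup N] [Module R N]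

/-- The linear maps `M → N` that vanish on `U` and take values in `W`, as linear maps
`M / U → W`. The two conditions are encoded as `U` mapping into `⊥` and `⊤` mapping into `W`. -/
def compatibleMapsBotInfTopEquiv (U : Submodule R M) (W : Submodule R N) :
    ↥(compatibleMaps U ⊥ ⊓ compatibleMaps ⊤ W) ≃ₗ[R] (M ⧸ U →ₗ[R] W) where
  toFun f := U.liftQ (f.1.codRestrict W fun _ => f.2.2 mem_top) <| by
    rw [LinearMap.ker_codRestrict]
    exact f.2.1
  invFun g :=
    have vanishes : U ≤ LinearMap.ker (W.subtype ∘ₗ g ∘ₗ U.mkQ) := fun x hx => by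
      simp [(Quotient.mk_eq_zero U).2 hx]
    ⟨W.subtype ∘ₗ g ∘ₗ U.mkQ, vanishes, fun x _ => (g (U.mkQ x)).2⟩
  map_add' _ _ := by ext; rfl
  map_smul' _ _ := by ext; rfl
  left_inv _ := rfl
  right_inv _ := by ext; rfl

end LinearAlgebra

section LieAlgebra

open Submodule

variable (L : Type*) [LieRing L] [LieAlgebra ℂ L]

theorem abgDer_alpha_zero_zero_eq_compatibleMaps {α : ℂ} (hα : α ≠ 0) :
    abgDer α 0 0 L = compatibleMaps (derivedSub L) ⊥ := by
  ext D
  calc D ∈ abgDer α 0 0 L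
      ↔ ∀ x y : L, α • D ⁅x, y⁆ = (0 : ℂ) • ⁅D x, y⁆ + (0 : ℂ) • ⁅x, D y⁆ := Iff.rfl
    _ ↔ ∀ x y : L, D ⁅x, y⁆ = 0 := by simp [hα]
    _ ↔ derivedSub L ≤ LinearMap.ker D := by
      rw [derivedSub, span_le]
      exact ⟨fun h _ ⟨x, y, hxy⟩ => hxy ▸ h x y, fun h x y => h ⟨x, y, rfl⟩⟩

theorem abgDer_zero_beta_zero_eq_compatibleMaps {β : ℂ} (hβ : β ≠ 0) :
    abgDer 0 β 0 L = compatibleMaps ⊤ (centerSub L) := by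
  ext D
  calc D ∈ abgDer 0 β 0 L
      ↔ ∀ x y : L, (0 : ℂ) • D ⁅x, y⁆ = β • ⁅D x, y⁆ + (0 : ℂ) • ⁅x, D y⁆ := Iff.rfl
    _ ↔ ∀ x y : L, ⁅D x, y⁆ = 0 := by simp [eq_comm (a := (0 : L)), hβ]
    _ ↔ ⊤ ≤ (centerSub L).comap D := ⟨fun h x _ => h x, fun h _ => h mem_top⟩

/-- Stated for cardinal ranks because `C(L)` may be infinite-dimensional here, where `finrank` would
be the junk value `0`. -/
theorem finrank_inf_abgDer_general [FiniteDimensional ℂ (L ⧸ derivedSub L)] :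
    Module.rank ℂ ↥(abgDer 1 0 0 L ⊓ abgDer 0 1 0 L) =
      Module.rank ℂ (L ⧸ derivedSub L) * Module.rank ℂ ↥(centerSub L) := by
  rw [abgDer_alpha_zero_zero_eq_compatibleMaps L one_ne_zero,
    abgDer_zero_beta_zero_eq_compatibleMaps L one_ne_zero,
    (compatibleMapsBotInfTopEquiv (derivedSub L) (centerSub L)).rank_eq, Module.rank_linearMap,
    Cardinal.lift_id, Cardinal.lift_id]

end LieAlgebra

/-- For a finite-dimensional complex Lie algebra `L`,
`dim (D(1,0,0)(L) ∩ D(0,1,0)(L)) = (dim L − dim L²) · dim C(L)`. -/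
theorem finrank_inf_abgDer (L : Type*) [LieRing L] [LieAlgebra ℂ L]
    [FiniteDimensional ℂ L] :
    Module.finrank ℂ ↥(abgDer 1 0 0 L ⊓ abgDer 0 1 0 L) =
      (Module.finrank ℂ L - Module.finrank ℂ ↥(derivedSub L)) *
        Module.finrank ℂ ↥(centerSub L) := by
  simp_rw [← Submodule.finrank_quotient, Module.finrank, finrank_inf_abgDer_general,
    Cardinal.toNat_mul]
end

section
/- Let L be a finite-dimensional complex Lie algebra. Then for every complex number α the following inequalities hold: (dim L − dim L²)·dim C(L) ≤ dim D(α,1,0)(L) ≤ dim D(0,1,−1)(L); dim D(α,1,0)(L) ≤ dim D(2α,1,1)(L); and (dim L − dim L²)·dim C(L) ≤ dim D(α,1,1)(L). -/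
/-!
An endomorphism that vanishes on `L²` and has central values makes every term of the defining
identity zero, so it lies in all the spaces `D(α,β,γ)`; such endomorphisms form a copy of
`Hom(L/L², C(L))`. If `D ∈ D(α,1,0)`, then antisymmetry of the bracket gives
`α D⁅x,y⁆ = ⁅D x,y⁆ = ⁅x,D y⁆`, and combining the two equalities with weights `β` and `γ` shows
`D(α,1,0) ⊆ D((β+γ)α,β,γ)`.
-/

section HomFactoring

variable {R M N : Type*} [CommRing R] [AddCommGroup M] [Module R M] [AddCommGroup N] [Module R N]

/-- The linear maps `M → N` that vanish on `p` and take values in `q`. -/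
def homVanishingInto (p : Submodule R M) (q : Submodule R N) : Submodule R (M →ₗ[R] N) :=
  p.compatibleMaps ⊥ ⊓ (⊤ : Submodule R M).compatibleMaps q

theorem mem_homVanishingInto {p : Submodule R M} {q : Submodule R N} {f : M →ₗ[R] N} :
    f ∈ homVanishingInto p q ↔ (∀ x ∈ p, f x = 0) ∧ ∀ x, f x ∈ q :=
  and_congr Iff.rfl ⟨fun h _ => h trivial, fun h x _ => h x⟩

/-- The universal properties of `M ⧸ p` and of `q ⊆ N`, as a linear equivalence sending `g` to the
composite `M → M ⧸ p → q → N`. -/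
def quotientHomEquivHomVanishingInto (p : Submodule R M) (q : Submodule R N) :
    ((M ⧸ p) →ₗ[R] q) ≃ₗ[R] homVanishingInto p q where
  toFun g := ⟨q.subtype ∘ₗ g ∘ₗ p.mkQ, mem_homVanishingInto.2
    ⟨fun x hx => by simp [(Submodule.Quotient.mk_eq_zero p).2 hx], fun x => (g (p.mkQ x)).2⟩⟩
  map_add' _ _ := rfl
  map_smul' _ _ := rfl
  invFun f := p.liftQ (f.1.codRestrict q (mem_homVanishingInto.1 f.2).2)
    fun x hx => Subtype.ext ((mem_homVanishingInto.1 f.2).1 x hx)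
  left_inv _ := Submodule.linearMap_qext _ rfl
  right_inv _ := rfl

end HomFactoring

theorem finrank_homVanishingInto {K V W : Type*} [Field K] [AddCommGroup V] [Module K V]
    [FiniteDimensional K V] [AddCommGroup W] [Module K W]
    (p : Submodule K V) (q : Submodule K W) :
    Module.finrank K (homVanishingInto p q) =
      (Module.finrank K V - Module.finrank K p) * Module.finrank K q := by
  rw [← (quotientHomEquivHomVanishingInto p q).finrank_eq, Module.finrank_linearMap,
    Submodule.finrank_quotient]

section GeneralizedDerivations

variable {L : Type*} [LieRing L] [LieAlgebra ℂ L] {α : ℂ} {D : Module.End ℂ L}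

theorem mem_abgDer_one_zero : D ∈ abgDer α 1 0 L ↔ ∀ x y, α • D ⁅x, y⁆ = ⁅D x, y⁆ :=
  forall₂_congr fun x y => by rw [one_smul, zero_smul, add_zero]

theorem smul_apply_lie_of_mem_abgDer_one_zero (hD : D ∈ abgDer α 1 0 L) (x y : L) :
    α • D ⁅x, y⁆ = ⁅x, D y⁆ := by
  rw [← lie_skew x y, map_neg, smul_neg, mem_abgDer_one_zero.1 hD, lie_skew]

variable (L)

/-- The central derivations of `L`: the endomorphisms that vanish on `L²` and take values in
`C(L)`. -/
def centralDer : Submodule ℂ (Module.End ℂ L) :=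
  homVanishingInto (derivedSub L) (centerSub L)

theorem centralDer_le_abgDer (α β γ : ℂ) : centralDer L ≤ abgDer α β γ L := by
  intro D hD x y
  obtain ⟨vanishes, central⟩ := mem_homVanishingInto.1 hD
  have map_lie : D ⁅x, y⁆ = 0 := vanishes _ (Submodule.subset_span ⟨x, y, rfl⟩)
  have lie_left : ⁅D x, y⁆ = 0 := central x y
  have lie_right : ⁅x, D y⁆ = 0 := by rw [← lie_skew, central y x, neg_zero]
  simp only [map_lie, lie_left, lie_right, smul_zero, add_zero]

theorem finrank_centralDer [FiniteDimensional ℂ L] :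
    Module.finrank ℂ (centralDer L) =
      (Module.finrank ℂ L - Module.finrank ℂ (derivedSub L)) * Module.finrank ℂ (centerSub L) :=
  finrank_homVanishingInto _ _

theorem finrank_sub_mul_finrank_centerSub_le_finrank_abgDer [FiniteDimensional ℂ L] (α β γ : ℂ) :
    (Module.finrank ℂ L - Module.finrank ℂ (derivedSub L)) * Module.finrank ℂ (centerSub L) ≤
      Module.finrank ℂ (abgDer α β γ L) :=
  (finrank_centralDer L).symm.trans_le (Submodule.finrank_mono (centralDer_le_abgDer L α β γ))

theorem abgDer_one_zero_le_abgDer_add_mul (α β γ : ℂ) :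
    abgDer α 1 0 L ≤ abgDer ((β + γ) * α) β γ L := by
  intro D hD x y
  calc ((β + γ) * α) • D ⁅x, y⁆
      = β • α • D ⁅x, y⁆ + γ • α • D ⁅x, y⁆ := by rw [mul_smul, add_smul]
    _ = β • ⁅D x, y⁆ + γ • ⁅x, D y⁆ := by
      rw [← mem_abgDer_one_zero.1 hD, ← smul_apply_lie_of_mem_abgDer_one_zero hD]

end GeneralizedDerivations

/-- For a finite-dimensional complex Lie algebra `L` and every `α : ℂ`:
`(dim L − dim L²)·dim C(L) ≤ dim D(α,1,0)(L) ≤ dim D(0,1,−1)(L)`;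
`dim D(α,1,0)(L) ≤ dim D(2α,1,1)(L)`; and
`(dim L − dim L²)·dim C(L) ≤ dim D(α,1,1)(L)`. -/
theorem abgDer_dim_inequalities (L : Type*) [LieRing L] [LieAlgebra ℂ L]
    [FiniteDimensional ℂ L] (α : ℂ) :
    ((Module.finrank ℂ L - Module.finrank ℂ ↥(derivedSub L)) *
        Module.finrank ℂ ↥(centerSub L) ≤ Module.finrank ℂ ↥(abgDer α 1 0 L) ∧
      Module.finrank ℂ ↥(abgDer α 1 0 L) ≤ Module.finrank ℂ ↥(abgDer 0 1 (-1) L)) ∧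
    Module.finrank ℂ ↥(abgDer α 1 0 L) ≤ Module.finrank ℂ ↥(abgDer (2 * α) 1 1 L) ∧
    (Module.finrank ℂ L - Module.finrank ℂ ↥(derivedSub L)) *
        Module.finrank ℂ ↥(centerSub L) ≤ Module.finrank ℂ ↥(abgDer α 1 1 L) := by
  have le_zero : abgDer α 1 0 L ≤ abgDer 0 1 (-1) L := by
    simpa only [add_neg_cancel, zero_mul] using abgDer_one_zero_le_abgDer_add_mul L α 1 (-1)
  have le_two_mul : abgDer α 1 0 L ≤ abgDer (2 * α) 1 1 L := by
    simpa only [one_add_one_eq_two] using abgDer_one_zero_le_abgDer_add_mul L α 1 1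
  exact ⟨⟨finrank_sub_mul_finrank_centerSub_le_finrank_abgDer L α 1 0,
      Submodule.finrank_mono le_zero⟩,
    Submodule.finrank_mono le_two_mul,
    finrank_sub_mul_finrank_centerSub_le_finrank_abgDer L α 1 1⟩
end
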